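/- Boundedness of the average squared natural distance for all arrival probabilities: suppose g has a positive definite fixed point P∞ and there exist m ≥ 1 and a positive definite symmetric matrix W such that g applied m times maps every positive definite P ≥ P∞ to a matrix ≤ W (Löwner order). Then for every arrival probability γ̄ ∈ (0,1], the matrix Linear/Gaussian/Bernoulli process started at P(0) = P∞ satisfies sup_{k∈ℕ} E[d(P∞, P(k))²] < ∞, where d is the natural (Fisher/affine-invariant) distance. -/

import Mathlib

open Matrix

noncomputable def matEigs {n : ℕ} (M : Matrix (Fin n) (Fin n) ℝ) : Fin n → ℝ := by
  classical exact if h : M.IsHermitian then h.eigenvalues else 0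

noncomputable def Matrix.PosSemidef.sqrt {n : Type*} [Fintype n] [DecidableEq n]
    {A : Matrix n n ℝ} (hA : A.PosSemidef) : Matrix n n ℝ :=
  hA.1.eigenvectorUnitary.1 *
    diagonal ((RCLike.ofReal : ℝ → ℝ) ∘ Real.sqrt ∘ hA.1.eigenvalues) *
    (star hA.1.eigenvectorUnitary : Matrix n n ℝ)

noncomputable def matSqrt {n : ℕ} (M : Matrix (Fin n) (Fin n) ℝ) :
    Matrix (Fin n) (Fin n) ℝ := by
  classical exact if h : M.PosSemidef then h.sqrt else 0

/-- The natural (Fisher / affine-invariant) distance on positive definite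
matrices: `d(P₁,P₂) = (∑ᵢ (log λᵢ)²)^{1/2}` where `λᵢ` are the eigenvalues of
`P₂^{-1/2} P₁ P₂^{-1/2}`. -/
noncomputable def natDist {n : ℕ} (P₁ P₂ : Matrix (Fin n) (Fin n) ℝ) : ℝ :=
  Real.sqrt (∑ i : Fin n,
    Real.log (matEigs ((matSqrt P₂)⁻¹ * P₁ * (matSqrt P₂)⁻¹) i) ^ 2)

open MeasureTheory ProbabilityTheory

/-- Time-update Riccati map `h(P) = A P Aᵀ + Q`. -/
def riccatiH {n : ℕ} (A Q P : Matrix (Fin n) (Fin n) ℝ) :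
    Matrix (Fin n) (Fin n) ℝ := A * P * Aᵀ + Q

/-- Measurement-update Riccati map `g(P) = ((A P Aᵀ + Q)⁻¹ + 𝓘)⁻¹`. -/
noncomputable def riccatiG {n : ℕ} (A Q I P : Matrix (Fin n) (Fin n) ℝ) :
    Matrix (Fin n) (Fin n) ℝ := ((A * P * Aᵀ + Q)⁻¹ + I)⁻¹

/-- The matrix Linear/Gaussian/Bernoulli covariance process driven by the
arrival sequence `ω : ℕ → Bool`, started at `P₀`. -/
noncomputable def lgbMatProc {n : ℕ} (A Q I P₀ : Matrix (Fin n) (Fin n) ℝ)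
    (ω : ℕ → Bool) : ℕ → Matrix (Fin n) (Fin n) ℝ
  | 0 => P₀
  | k + 1 =>
      if ω k then riccatiG A Q I (lgbMatProc A Q I P₀ ω k)
      else riccatiH A Q (lgbMatProc A Q I P₀ ω k)

/-!
The set of covariances above `P∞` is invariant under `g` and `h`. On it `h` multiplies a Löwner
bound `s • P∞`, `s ≥ 1`, by at most a fixed factor `a`, while `m` consecutive arrivals reset the
covariance below `W`, whatever came before. Looking back from time `k` in blocks of length `m`, if
the `j` most recent blocks each contain a drop and the next one does not, then
`P(k) ≤ b ^ (j + 1) • P∞` with `b` independent of `k`, so the natural distance from `P∞` is at most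
`√n * log b * (j + 1)`. Disjoint blocks are independent, so this `j` has a geometric tail uniform in
`k`, and a geometric tail has bounded moments of every order.
-/

section GeometricTails

open Finset
open scoped ENNReal NNReal

variable {Ω : Type*} [MeasurableSpace Ω] {μ : Measure Ω}

lemma measure_biUnion_compl_le_one_sub_pow {α : Type*} {s : α → Set Ω}
    (hsm : ∀ i, MeasurableSet (s i)) (hs : iIndepSet s μ) {γ : ℝ≥0∞} (hγ : ∀ i, γ ≤ μ (s i))
    {S : Finset α} {m : ℕ} (hS : #S ≤ m) : μ (⋃ i ∈ S, (s i)ᶜ) ≤ 1 - γ ^ m := by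
  have := hs.isProbabilityMeasure
  obtain rfl | ⟨i, -⟩ := S.eq_empty_or_nonempty
  · simp
  have hprod : γ ^ m ≤ ∏ i ∈ S, μ (s i) :=
    calc γ ^ m ≤ γ ^ #S := pow_le_pow_right_of_le_one' ((hγ i).trans prob_le_one) hS
      _ ≤ ∏ i ∈ S, μ (s i) := pow_card_le_prod S _ γ fun i _ => hγ i
  rw [← Set.compl_iInter₂, prob_compl_eq_one_sub (S.measurableSet_biInter fun i _ => hsm i),
    hs.meas_biInter]
  gcongr

lemma measure_biInter_biUnion_compl_le_pow {α β : Type*} {s : α → Set Ω}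
    (hsm : ∀ i, MeasurableSet (s i)) (hs : iIndepSet s μ) {γ : ℝ≥0∞} (hγ : ∀ i, γ ≤ μ (s i))
    {S : β → Finset α} (hdisj : Pairwise (Function.onFun Disjoint S)) {m : ℕ}
    (hcard : ∀ j, #(S j) ≤ m) (J : Finset β) :
    μ (⋂ j ∈ J, ⋃ i ∈ S j, (s i)ᶜ) ≤ (1 - γ ^ m) ^ #J := by
  classical
  have := hs.isProbabilityMeasure
  induction J using Finset.induction_on with
  | empty => simp
  | insert a J ha ih =>
    let T : Set α := ⋃ j ∈ J, S j
    have hdisjT : Disjoint (S a : Set α) T :=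
      Set.disjoint_iUnion₂_right.2 fun j hj =>
        disjoint_coe.2 (hdisj (ne_of_mem_of_not_mem hj ha).symm)
    have hgen {U : Set α} {i : α} (hi : i ∈ U) :
        MeasurableSet[.generateFrom {t | ∃ n ∈ U, s n = t}] (s i)ᶜ :=
      .compl (MeasurableSpace.measurableSet_generateFrom ⟨i, hi, rfl⟩)
    have hindep := (Indep_iff _ _ μ).1 (hs.indep_generateFrom_of_disjoint hsm _ _ hdisjT) _ _
      (Finset.measurableSet_biUnion (S a) fun i hi => hgen hi)
      (Finset.measurableSet_biInter J fun j hj =>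
        Finset.measurableSet_biUnion (S j) fun i hi => hgen (Set.mem_biUnion hj hi))
    rw [set_biInter_insert, hindep, card_insert_of_notMem ha, pow_succ']
    exact mul_le_mul' (measure_biUnion_compl_le_one_sub_pow hsm hs hγ (hcard a)) ih

lemma tsum_pow_mul_geometric_ne_top (p : ℕ) {q : ℝ≥0∞} (hq : q < 1) :
    ∑' j : ℕ, (j + 1 : ℝ≥0∞) ^ p * q ^ j ≠ ∞ := by
  lift q to ℝ≥0 using hq.ne_top
  have hsum : Summable fun j : ℕ => ((p.factorial * (j + p).choose p : ℕ) : ℝ≥0) * q ^ j := by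
    rw [← NNReal.summable_coe]
    simpa [mul_assoc] using (summable_choose_mul_geometric_of_norm_lt_one p
      (by simpa using hq : ‖(q : ℝ)‖ < 1)).mul_left (p.factorial : ℝ)
  refine ne_top_of_le_ne_top (ENNReal.tsum_coe_ne_top_iff_summable.2 hsum) ?_
  refine ENNReal.tsum_le_tsum fun j => ?_
  have hpow : (j + 1) ^ p ≤ p.factorial * (j + p).choose p := by
    rw [← Nat.ascFactorial_eq_factorial_mul_choose]
    exact Nat.pow_succ_le_ascFactorial _ _
  push_cast
  gcongr
  exact_mod_cast hpow

lemma lintegral_le_tsum_of_forall_exists_mem {f : Ω → ℝ≥0∞} {S : ℕ → Set Ω} {c : ℕ → ℝ≥0∞}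
    (h : ∀ ω, ∃ j, ω ∈ S j ∧ f ω ≤ c j) : ∫⁻ ω, f ω ∂μ ≤ ∑' j, c j * μ (S j) := by
  have hpointwise (ω : Ω) : f ω ≤ ∑' j, (toMeasurable μ (S j)).indicator (fun _ => c j) ω := by
    obtain ⟨j, hj, hfc⟩ := h ω
    calc f ω ≤ c j := hfc
      _ = (toMeasurable μ (S j)).indicator (fun _ => c j) ω :=
        (Set.indicator_of_mem (subset_toMeasurable μ _ hj) fun _ => c j).symm
      _ ≤ _ := ENNReal.le_tsum j
  calc ∫⁻ ω, f ω ∂μ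
      ≤ ∫⁻ ω, ∑' j, (toMeasurable μ (S j)).indicator (fun _ => c j) ω ∂μ :=
        lintegral_mono hpointwise
    _ = ∑' j, ∫⁻ ω, (toMeasurable μ (S j)).indicator (fun _ => c j) ω ∂μ :=
        lintegral_tsum fun j =>
          (measurable_const.indicator (measurableSet_toMeasurable μ (S j))).aemeasurable
    _ = ∑' j, c j * μ (S j) := by
        simp only [lintegral_indicator_const, measurableSet_toMeasurable, measure_toMeasurable]

lemma exists_forall_lintegral_le_of_geometric_tail {κ : Type*} {f : κ → Ω → ℝ≥0∞}
    {S : κ → ℕ → Set Ω} {c q : ℝ≥0∞} (hc : c ≠ ∞) (hq : q < 1) (p : ℕ)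
    (hS : ∀ k j, μ (S k j) ≤ q ^ j) (hf : ∀ k ω, ∃ j, ω ∈ S k j ∧ f k ω ≤ (c * (j + 1)) ^ p) :
    ∃ C : ℝ, ∀ k, ∫⁻ ω, f k ω ∂μ ≤ ENNReal.ofReal C := by
  have hfinite : c ^ p * ∑' j : ℕ, (j + 1 : ℝ≥0∞) ^ p * q ^ j ≠ ∞ :=
    ENNReal.mul_ne_top (ENNReal.pow_ne_top hc) (tsum_pow_mul_geometric_ne_top p hq)
  refine ⟨(c ^ p * ∑' j : ℕ, (j + 1 : ℝ≥0∞) ^ p * q ^ j).toReal, fun k => ?_⟩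
  calc ∫⁻ ω, f k ω ∂μ ≤ ∑' j : ℕ, (c * (j + 1)) ^ p * μ (S k j) :=
        lintegral_le_tsum_of_forall_exists_mem (hf k)
    _ ≤ ∑' j : ℕ, c ^ p * ((j + 1) ^ p * q ^ j) := by
        simp_rw [mul_pow, mul_assoc]
        gcongr
        exact hS k _
    _ = c ^ p * ∑' j : ℕ, (j + 1 : ℝ≥0∞) ^ p * q ^ j := ENNReal.tsum_mul_left
    _ = _ := (ENNReal.ofReal_toReal hfinite).symm

end GeometricTails

section LoewnerOrder

open scoped MatrixOrder

variable {ι : Type*} {n : ℕ}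

lemma posDef_of_le {X Y : Matrix ι ι ℝ} (hX : X.PosDef) (hXY : X ≤ Y) : Y.PosDef := by
  simpa using hX.add_posSemidef (Matrix.le_iff.1 hXY)

lemma matrix_inv_le_inv [Fintype ι] [DecidableEq ι] {X Y : Matrix ι ι ℝ} (hX : X.PosDef)
    (hXY : X ≤ Y) : Y⁻¹ ≤ X⁻¹ := by
  have hY := posDef_of_le hX hXY
  have := hX.isUnit.invertible
  have := hX.inv.isUnit.invertible
  have := hY.isUnit.invertible
  -- `Y - X` and `X⁻¹ - Y⁻¹` are the two Schur complements of one block matrix.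
  have hblocks : (fromBlocks Y 1 1ᴴ X⁻¹).PosSemidef :=
    (PosDef.fromBlocks₂₂ Y 1 hX.inv).2 (by simpa using Matrix.le_iff.1 hXY)
  simpa [Matrix.le_iff] using (PosDef.fromBlocks₁₁ 1 X⁻¹ hY).1 hblocks

lemma exists_le_smul_of_posDef [Finite ι] {P W : Matrix ι ι ℝ} (hP : P.PosDef)
    (hW : W.IsHermitian) : ∃ c : ℝ, 1 ≤ c ∧ W ≤ c • P := by
  classical
  have := Fintype.ofFinite ι
  cases isEmpty_or_nonempty ι
  · exact ⟨1, le_rfl, (Subsingleton.elim _ _).le⟩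
  obtain ⟨r, hr, hrP⟩ := (CFC.exists_pos_algebraMap_le_iff hP.isHermitian).2
    fun _ => (isStrictlyPositive_iff_posDef.2 hP).spectrum_pos
  obtain ⟨b, hb⟩ := (finite_real_spectrum (A := W)).bddAbove
  obtain ⟨c, hc⟩ : ∃ c, c = max 1 (b / r) := ⟨_, rfl⟩
  have hbcr : b ≤ c * r := (div_le_iff₀ hr).1 (hc ▸ le_max_right _ _)
  have hc1 : 1 ≤ c := hc ▸ le_max_left _ _
  refine ⟨c, hc1, ?_⟩
  calc W ≤ algebraMap ℝ _ (c * r) :=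
        (le_algebraMap_iff_spectrum_le (ha := hW.isSelfAdjoint)).2 fun x hx => (hb hx).trans hbcr
    _ = c • algebraMap ℝ _ r := by rw [map_mul, Algebra.smul_def]
    _ ≤ c • P := by gcongr

lemma matSqrt_eq_cfcSqrt {M : Matrix (Fin n) (Fin n) ℝ} (hM : M.PosSemidef) :
    matSqrt M = CFC.sqrt M := by
  rw [CFC.sqrt_eq_real_sqrt M hM.nonneg, cfcₙ_eq_cfc, hM.1.cfc_eq, matSqrt, dif_pos hM]
  rfl

lemma inv_cfcSqrt_mul_self_mul_inv_cfcSqrt [Fintype ι] [DecidableEq ι] {P : Matrix ι ι ℝ}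
    (hP : P.PosDef) : (CFC.sqrt P)⁻¹ * P * (CFC.sqrt P)⁻¹ = 1 := by
  have hunit : IsUnit (CFC.sqrt P).det :=
    (isUnit_iff_isUnit_det _).1 ((CFC.isUnit_sqrt_iff P hP.posSemidef.nonneg).2 hP.isUnit)
  nth_rw 2 [← CFC.sqrt_mul_sqrt_self P hP.posSemidef.nonneg]
  rw [nonsing_inv_mul_cancel_left _ _ hunit, mul_nonsing_inv _ hunit]

lemma natDist_le {P₁ P₂ : Matrix (Fin n) (Fin n) ℝ} (hP₂ : P₂.PosDef) {s : ℝ}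
    (hs : 0 < s) (hlower : s⁻¹ • P₂ ≤ P₁) (hupper : P₁ ≤ s • P₂) :
    natDist P₁ P₂ ≤ √n * Real.log s := by
  obtain ⟨R, hR⟩ : ∃ R, R = (CFC.sqrt P₂)⁻¹ := ⟨_, rfl⟩
  have hRsa : IsSelfAdjoint R := hR ▸ (CFC.sqrt_nonneg P₂).posSemidef.isHermitian.inv
  have hRP₂ : R * P₂ * R = 1 := hR ▸ inv_cfcSqrt_mul_self_mul_inv_cfcSqrt hP₂
  have hM₁ : algebraMap ℝ _ s⁻¹ ≤ R * P₁ * R := by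
    simpa [hRP₂, Algebra.algebraMap_eq_smul_one] using hRsa.conjugate_le_conjugate hlower
  have hM₂ : R * P₁ * R ≤ algebraMap ℝ _ s := by
    simpa [hRP₂, Algebra.algebraMap_eq_smul_one] using hRsa.conjugate_le_conjugate hupper
  have hM : (R * P₁ * R).IsHermitian :=
    IsSelfAdjoint.conjugate_self (posDef_of_le (hP₂.smul (inv_pos.2 hs)) hlower).1 hRsa
  have hlog (i : Fin n) : |Real.log (hM.eigenvalues i)| ≤ Real.log s := by
    have hi := hM.eigenvalues_mem_spectrum_real i
    have hi₁ := (algebraMap_le_iff_le_spectrum (ha := hM.isSelfAdjoint)).1 hM₁ _ hi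
    have hi₂ := (le_algebraMap_iff_spectrum_le (ha := hM.isSelfAdjoint)).1 hM₂ _ hi
    have hpos : 0 < hM.eigenvalues i := (inv_pos.2 hs).trans_le hi₁
    refine abs_le.2 ⟨?_, Real.log_le_log hpos hi₂⟩
    simpa only [Real.log_inv] using Real.log_le_log (inv_pos.2 hs) hi₁
  rw [natDist, matSqrt_eq_cfcSqrt hP₂.posSemidef, ← hR, matEigs, dif_pos hM]
  obtain rfl | ⟨⟨i⟩⟩ := n.eq_zero_or_pos.imp_right Fin.pos_iff_nonempty.1
  · simp
  refine Real.sqrt_le_iff.2 ⟨by have := (abs_nonneg _).trans (hlog i); positivity, ?_⟩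
  calc ∑ i, Real.log (hM.eigenvalues i) ^ 2 ≤ ∑ _ : Fin n, Real.log s ^ 2 :=
        Finset.sum_le_sum fun i _ => sq_le_sq.2 ((hlog i).trans (le_abs_self _))
    _ = (√n * Real.log s) ^ 2 := by simp [mul_pow]

lemma riccatiG_eq (A Q I P : Matrix (Fin n) (Fin n) ℝ) :
    riccatiG A Q I P = ((riccatiH A Q P)⁻¹ + I)⁻¹ := rfl

variable {A Q I P P' P₀ Pinf W : Matrix (Fin n) (Fin n) ℝ}

lemma posDef_riccatiH (hA : IsUnit A.det) (hQ : Q.PosSemidef) (hP : P.PosDef) :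
    (riccatiH A Q P).PosDef := by
  have hAP := ((isUnit_iff_isUnit_det A).2 hA).posDef_star_right_conjugate_iff.2 hP
  exact hAP.add_posSemidef hQ

lemma riccatiH_mono (A Q : Matrix (Fin n) (Fin n) ℝ) : Monotone (riccatiH A Q) :=
  fun _ _ h => add_le_add_left (star_right_conjugate_le_conjugate h A) Q

lemma riccatiH_smul_le (hQ : Q.PosSemidef) {s : ℝ} (hs : 1 ≤ s) :
    riccatiH A Q (s • P) ≤ s • riccatiH A Q P := by
  have hQs : Q ≤ s • Q := by simpa using smul_le_smul_of_nonneg_right hs hQ.nonneg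
  simpa [riccatiH] using hQs

lemma riccatiG_le_riccatiH (hI : I.PosSemidef) (hH : (riccatiH A Q P).PosDef) :
    riccatiG A Q I P ≤ riccatiH A Q P := by
  have hle : (riccatiH A Q P)⁻¹ ≤ (riccatiH A Q P)⁻¹ + I := le_add_of_nonneg_right hI.nonneg
  simpa only [riccatiG_eq, nonsing_inv_nonsing_inv _ ((isUnit_iff_isUnit_det _).1 hH.isUnit)]
    using matrix_inv_le_inv hH.inv hle

lemma riccatiG_le_riccatiG (hI : I.PosSemidef) (hH : (riccatiH A Q P).PosDef) (h : P ≤ P') :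
    riccatiG A Q I P ≤ riccatiG A Q I P' := by
  have hH' := riccatiH_mono A Q h
  have hHinv' := (posDef_of_le hH hH').inv
  exact matrix_inv_le_inv (hHinv'.add_posSemidef hI) (add_le_add_left (matrix_inv_le_inv hH hH') I)

lemma le_lgbMatProc (hI : I.PosSemidef) (hH : (riccatiH A Q Pinf).PosDef)
    (hsub : Pinf ≤ riccatiG A Q I Pinf) (hP₀ : Pinf ≤ P₀) (ω : ℕ → Bool) (k : ℕ) :
    Pinf ≤ lgbMatProc A Q I P₀ ω k := by
  induction k with
  | zero => exact hP₀
  | succ k ih =>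
    have hG := hsub.trans (riccatiG_le_riccatiG hI hH ih)
    rw [lgbMatProc]
    split_ifs
    · exact hG
    · exact hG.trans (riccatiG_le_riccatiH hI (posDef_of_le hH (riccatiH_mono A Q ih)))

lemma lgbMatProc_succ_le_riccatiH (hI : I.PosSemidef) {ω : ℕ → Bool} {k : ℕ}
    (hH : (riccatiH A Q (lgbMatProc A Q I P₀ ω k)).PosDef) :
    lgbMatProc A Q I P₀ ω (k + 1) ≤ riccatiH A Q (lgbMatProc A Q I P₀ ω k) := by
  rw [lgbMatProc]
  split_ifs
  · exact riccatiG_le_riccatiH hI hH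
  · exact le_rfl

lemma lgbMatProc_add_le_smul (hQ : Q.PosSemidef) (hI : I.PosSemidef)
    (hH : (riccatiH A Q Pinf).PosDef) (hsub : Pinf ≤ riccatiG A Q I Pinf) (hP₀ : Pinf ≤ P₀)
    {a s : ℝ} (ha : 1 ≤ a) (hs : 1 ≤ s) (haP : riccatiH A Q Pinf ≤ a • Pinf)
    {ω : ℕ → Bool} {k : ℕ} (hk : lgbMatProc A Q I P₀ ω k ≤ s • Pinf) (j : ℕ) :
    lgbMatProc A Q I P₀ ω (k + j) ≤ (s * a ^ j) • Pinf := by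
  induction j with
  | zero => simpa using hk
  | succ j ih =>
    have hsa : 1 ≤ s * a ^ j := one_le_mul_of_one_le_of_one_le hs (one_le_pow₀ ha)
    have hHk := posDef_of_le hH (riccatiH_mono A Q (le_lgbMatProc hI hH hsub hP₀ ω (k + j)))
    calc lgbMatProc A Q I P₀ ω (k + j + 1)
        ≤ riccatiH A Q (lgbMatProc A Q I P₀ ω (k + j)) := lgbMatProc_succ_le_riccatiH hI hHk
      _ ≤ riccatiH A Q ((s * a ^ j) • Pinf) := riccatiH_mono A Q ih
      _ ≤ (s * a ^ j) • riccatiH A Q Pinf := riccatiH_smul_le hQ hsa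
      _ ≤ (s * a ^ j) • a • Pinf := by gcongr
      _ = (s * a ^ (j + 1)) • Pinf := by rw [smul_smul, pow_succ, mul_assoc]

lemma lgbMatProc_add_eq_iterate_riccatiG {ω : ℕ → Bool} {k m : ℕ}
    (hω : ∀ t ∈ Finset.Ico k (k + m), ω t = true) :
    lgbMatProc A Q I P₀ ω (k + m) = (riccatiG A Q I)^[m] (lgbMatProc A Q I P₀ ω k) := by
  induction m with
  | zero => rfl
  | succ m ih =>
    have hinit : lgbMatProc A Q I P₀ ω (k + m) = (riccatiG A Q I)^[m] (lgbMatProc A Q I P₀ ω k) :=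
      ih fun t ht => hω t (Finset.Ico_subset_Ico_right (by lia) ht)
    have hlast : ω (k + m) = true := hω _ (by simp)
    rw [Function.iterate_succ_apply', ← hinit, ← add_assoc, lgbMatProc, if_pos hlast]

/-- The `i`-th length-`m` block of time steps counted backwards from time `k`, namely
`{k - (i + 1) * m, …, k - i * m - 1}`. Truncated subtraction shortens or empties the blocks that
would reach below time `0`. -/
def lookbackBlock (m k i : ℕ) : Finset ℕ := Finset.Ico (k - (i + 1) * m) (k - i * m)

lemma card_lookbackBlock_le (m k i : ℕ) : (lookbackBlock m k i).card ≤ m := by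
  rw [lookbackBlock, Nat.card_Ico, add_one_mul]
  omega

lemma pairwise_disjoint_lookbackBlock (m k : ℕ) :
    Pairwise (Function.onFun Disjoint (lookbackBlock m k)) := by
  have hanti : Antitone fun i => k - i * m := fun i j hij => by dsimp only; gcongr
  refine hanti.pairwise_disjoint_on_Ico_succ.mono fun i j hij => ?_
  simpa [Function.onFun, lookbackBlock, ← Finset.disjoint_coe] using hij

lemma lookbackBlock_self_eq_empty (m k : ℕ) : lookbackBlock m k k = ∅ := by
  rw [lookbackBlock, Finset.Ico_eq_empty_iff, not_lt]
  obtain rfl | hm := m.eq_zero_or_pos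
  · simp
  · simp [Nat.le_mul_of_pos_right k hm]

lemma lgbMatProc_le_of_lookbackBlock (hQ : Q.PosSemidef) (hI : I.PosSemidef)
    (hPinf : Pinf.PosSemidef) (hH : (riccatiH A Q Pinf).PosDef)
    (hsub : Pinf ≤ riccatiG A Q I Pinf) (hP₀ : Pinf ≤ P₀) {a w : ℝ} (ha : 1 ≤ a) (hw : 1 ≤ w)
    (haP : riccatiH A Q Pinf ≤ a • Pinf) (hP₀w : P₀ ≤ w • Pinf) {m : ℕ}
    (hbound : ∀ P, Pinf ≤ P → (riccatiG A Q I)^[m] P ≤ w • Pinf) {ω : ℕ → Bool} {k j : ℕ}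
    (hω : ∀ t ∈ lookbackBlock m k j, ω t = true) :
    lgbMatProc A Q I P₀ ω k ≤ (w * a ^ m) ^ (j + 1) • Pinf := by
  have hPinf_nonneg := hPinf.nonneg
  have hgrowth {l d : ℕ} (hd : d ≤ m * (j + 1)) (hl : lgbMatProc A Q I P₀ ω l ≤ w • Pinf) :
      lgbMatProc A Q I P₀ ω (l + d) ≤ (w * a ^ m) ^ (j + 1) • Pinf := by
    have hscale : w * a ^ d ≤ (w * a ^ m) ^ (j + 1) := by
      rw [mul_pow, ← pow_mul]
      gcongr
      exact le_self_pow₀ hw j.succ_ne_zero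
    exact (lgbMatProc_add_le_smul hQ hI hH hsub hP₀ ha hw haP hl d).trans (by gcongr)
  obtain hk | hk := le_total (m * (j + 1)) k
  · obtain ⟨l, rfl⟩ := Nat.exists_eq_add_of_le' hk
    have hblock : lookbackBlock m (l + m * (j + 1)) j = Finset.Ico l (l + m) := by
      rw [lookbackBlock]
      congr 1 <;> lia
    have hreset : lgbMatProc A Q I P₀ ω (l + m) ≤ w • Pinf := by
      rw [lgbMatProc_add_eq_iterate_riccatiG (hblock ▸ hω)]
      exact hbound _ (le_lgbMatProc hI hH hsub hP₀ ω l)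
    rw [show l + m * (j + 1) = l + m + m * j by ring]
    exact hgrowth (by gcongr; exact j.le_succ) hreset
  · simpa only [zero_add] using hgrowth (l := 0) hk hP₀w

lemma exists_lgbMatProc_le_pow_smul (hQ : Q.PosSemidef) (hI : I.PosSemidef) (hPinf : Pinf.PosDef)
    (hH : (riccatiH A Q Pinf).PosDef) (hsub : Pinf ≤ riccatiG A Q I Pinf) (hP₀ : Pinf ≤ P₀)
    (hW : W.IsHermitian) {m : ℕ} (hbound : ∀ P, Pinf ≤ P → (riccatiG A Q I)^[m] P ≤ W) :
    ∃ b : ℝ, 1 ≤ b ∧ ∀ (ω : ℕ → Bool) (k : ℕ), ∃ j : ℕ,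
      (∀ i < j, ∃ t ∈ lookbackBlock m k i, ω t = false) ∧
        lgbMatProc A Q I P₀ ω k ≤ b ^ (j + 1) • Pinf := by
  obtain ⟨a, ha, haP⟩ := exists_le_smul_of_posDef hPinf hH.isHermitian
  obtain ⟨w₀, hw₀, hw₀P⟩ := exists_le_smul_of_posDef hPinf (posDef_of_le hPinf hP₀).isHermitian
  obtain ⟨w₁, -, hw₁P⟩ := exists_le_smul_of_posDef hPinf hW
  obtain ⟨w, hw₀w, hw₁w⟩ : ∃ w, w₀ ≤ w ∧ w₁ ≤ w := ⟨max w₀ w₁, le_max_left .., le_max_right ..⟩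
  have hPinf_nonneg := hPinf.posSemidef.nonneg
  have hw : 1 ≤ w := hw₀.trans hw₀w
  have hP₀w : P₀ ≤ w • Pinf := hw₀P.trans (by gcongr)
  have hWw : W ≤ w • Pinf := hw₁P.trans (by gcongr)
  refine ⟨w * a ^ m, one_le_mul_of_one_le_of_one_le hw (one_le_pow₀ ha), fun ω k => ?_⟩
  have hex : ∃ j, ∀ t ∈ lookbackBlock m k j, ω t = true :=
    ⟨k, by simp [lookbackBlock_self_eq_empty]⟩
  exact ⟨Nat.find hex, fun i hi => by simpa using Nat.find_min hex hi,
    lgbMatProc_le_of_lookbackBlock hQ hI hPinf.posSemidef hH hsub hP₀ ha hw haP hP₀w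
      (fun P hP => (hbound P hP).trans hWw) (Nat.find_spec hex)⟩

lemma natDist_lgbMatProc_le (hPinf : Pinf.PosDef) (hI : I.PosSemidef)
    (hH : (riccatiH A Q Pinf).PosDef) (hsub : Pinf ≤ riccatiG A Q I Pinf) (hP₀ : Pinf ≤ P₀)
    {s : ℝ} (hs : 1 ≤ s) {ω : ℕ → Bool} {k : ℕ} (hk : lgbMatProc A Q I P₀ ω k ≤ s • Pinf) :
    natDist Pinf (lgbMatProc A Q I P₀ ω k) ≤ √n * Real.log s := by
  have hs₀ : 0 < s := zero_lt_one.trans_le hs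
  have hle := le_lgbMatProc hI hH hsub hP₀ ω k
  have hP := posDef_of_le hPinf hle
  refine natDist_le hP hs₀ ((inv_smul_le_iff_of_pos hs₀).2 hk) (hle.trans ?_)
  simpa using smul_le_smul_of_nonneg_right hs hP.posSemidef.nonneg

lemma exists_natDist_lgbMatProc_le (hQ : Q.PosSemidef) (hI : I.PosSemidef) (hPinf : Pinf.PosDef)
    (hH : (riccatiH A Q Pinf).PosDef) (hsub : Pinf ≤ riccatiG A Q I Pinf) (hP₀ : Pinf ≤ P₀)
    (hW : W.IsHermitian) {m : ℕ} (hbound : ∀ P, Pinf ≤ P → (riccatiG A Q I)^[m] P ≤ W) :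
    ∃ c : ℝ, 0 ≤ c ∧ ∀ (ω : ℕ → Bool) (k : ℕ), ∃ j : ℕ,
      (∀ i < j, ∃ t ∈ lookbackBlock m k i, ω t = false) ∧
        natDist Pinf (lgbMatProc A Q I P₀ ω k) ≤ c * (j + 1) := by
  obtain ⟨b, hb, hblocks⟩ := exists_lgbMatProc_le_pow_smul hQ hI hPinf hH hsub hP₀ hW hbound
  refine ⟨√n * Real.log b, mul_nonneg (Real.sqrt_nonneg _) (Real.log_nonneg hb), fun ω k => ?_⟩
  obtain ⟨j, hj, hP⟩ := hblocks ω k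
  refine ⟨j, hj, ?_⟩
  calc natDist Pinf (lgbMatProc A Q I P₀ ω k) ≤ √n * Real.log (b ^ (j + 1)) :=
        natDist_lgbMatProc_le hPinf hI hH hsub hP₀ (one_le_pow₀ hb) hP
    _ = √n * Real.log b * (j + 1) := by
        rw [Real.log_pow]
        push_cast
        ring

theorem lgb_average_sq_natDist_bounded_general {Ω : Type*} [MeasurableSpace Ω] {μ : Measure Ω}
    (hQ : Q.PosSemidef) (hI : I.PosSemidef) (hPinf : Pinf.PosDef)
    (hH : (riccatiH A Q Pinf).PosDef) (hsub : Pinf ≤ riccatiG A Q I Pinf) (hP₀ : Pinf ≤ P₀)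
    (hW : W.IsHermitian) {m : ℕ} (hbound : ∀ P, Pinf ≤ P → (riccatiG A Q I)^[m] P ≤ W)
    {X : ℕ → Ω → Bool} (hX : ∀ k, Measurable (X k)) (hindep : iIndepFun X μ)
    {γ : ENNReal} (hγ : γ ≠ 0) (harrival : ∀ k, γ ≤ μ {ω | X k ω = true}) (p : ℕ) :
    ∃ C : ℝ, ∀ k : ℕ,
      ∫⁻ ω, ENNReal.ofReal (natDist Pinf (lgbMatProc A Q I P₀ (fun i => X i ω) k) ^ p) ∂μ
        ≤ ENNReal.ofReal C := by
  obtain ⟨c, hc, hdist⟩ := exists_natDist_lgbMatProc_le hQ hI hPinf hH hsub hP₀ hW hbound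
  have hAm (k : ℕ) : MeasurableSet {ω | X k ω = true} := hX k (measurableSet_singleton true)
  have hA : iIndepSet (fun k => {ω | X k ω = true}) μ :=
    (iIndepSet_iff_meas_biInter hAm).2 fun S =>
      hindep.meas_biInter fun k _ => ⟨{true}, measurableSet_singleton true, rfl⟩
  let dropInEachBlock (k j : ℕ) : Set Ω :=
    ⋂ i ∈ Finset.range j, ⋃ t ∈ lookbackBlock m k i, {ω | X t ω = true}ᶜ
  have htail (k j : ℕ) : μ (dropInEachBlock k j) ≤ (1 - γ ^ m) ^ j := by
    simpa only [Finset.card_range] using measure_biInter_biUnion_compl_le_pow hAm hA harrival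
      (pairwise_disjoint_lookbackBlock m k) (card_lookbackBlock_le m k) (Finset.range j)
  have hq : 1 - γ ^ m < 1 := ENNReal.sub_lt_self ENNReal.one_ne_top one_ne_zero (pow_ne_zero m hγ)
  refine exists_forall_lintegral_le_of_geometric_tail (ENNReal.ofReal_ne_top (r := c)) hq p htail
    fun k ω => ?_
  obtain ⟨j, hj, hle⟩ := hdist (fun i => X i ω) k
  refine ⟨j, by simpa [dropInEachBlock] using hj, ?_⟩
  calc ENNReal.ofReal (natDist Pinf (lgbMatProc A Q I P₀ (fun i => X i ω) k) ^ p)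
      = ENNReal.ofReal (natDist Pinf (lgbMatProc A Q I P₀ (fun i => X i ω) k)) ^ p :=
        ENNReal.ofReal_pow (Real.sqrt_nonneg _) p
    _ ≤ ENNReal.ofReal (c * (j + 1)) ^ p := by gcongr
    _ = (ENNReal.ofReal c * (j + 1)) ^ p := by
        rw [ENNReal.ofReal_mul hc, ENNReal.ofReal_add j.cast_nonneg zero_le_one,
          ENNReal.ofReal_natCast, ENNReal.ofReal_one]

end LoewnerOrder

/-- If `g` has a positive definite fixed point `P∞` and some
iterate `g^{∘m}` (`m ≥ 1`) maps every positive definite `P ≥ P∞` below a fixed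
positive definite `W` (Löwner order), then for every arrival probability
`γ̄ ∈ (0,1]` the matrix LGB process started at `P∞` has uniformly bounded
average squared natural distance: `sup_k E[d(P∞,P(k))²] < ∞`. -/
theorem lgb_average_sq_natDist_bounded
    {n : ℕ} (hn : 1 ≤ n) (A Q I Pinf W : Matrix (Fin n) (Fin n) ℝ)
    (hA : IsUnit A.det) (hQ : Q.PosSemidef) (hI : I.PosSemidef)
    (hPinf : Pinf.PosDef) (hfix : riccatiG A Q I Pinf = Pinf)
    (m : ℕ) (hm : 1 ≤ m) (hW : W.PosDef)
    (hbound : ∀ P : Matrix (Fin n) (Fin n) ℝ, P.PosDef → (P - Pinf).PosSemidef →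
      (W - (riccatiG A Q I)^[m] P).PosSemidef)
    (γ : ℝ) (hγ : γ ∈ Set.Ioc (0 : ℝ) 1)
    (μ : Measure (ℕ → Bool)) [IsProbabilityMeasure μ]
    (hBern : ∀ k : ℕ, μ {ω : ℕ → Bool | ω k = true} = ENNReal.ofReal γ)
    (hIndep : iIndepFun
      (fun (k : ℕ) (ω : ℕ → Bool) => ω k) μ) :
    ∃ C : ℝ, ∀ k : ℕ,
      ∫⁻ ω, ENNReal.ofReal (natDist Pinf (lgbMatProc A Q I Pinf ω k) ^ 2) ∂μ
        ≤ ENNReal.ofReal C := by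
  open scoped MatrixOrder in
  exact lgb_average_sq_natDist_bounded_general hQ hI hPinf (posDef_riccatiH hA hQ hPinf) hfix.ge
    le_rfl hW.isHermitian (fun P hP => hbound P (posDef_of_le hPinf hP) hP)
    measurable_pi_apply hIndep (ENNReal.ofReal_pos.2 hγ.1).ne' (fun k => (hBern k).ge) 2
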